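/- Let N ≥ 1 and Λ > 1. If (u₁, v₁) and (u₂, v₂) are two classical solutions of the system (P_Λ) with nonnegative components, both satisfying condition (h∞), then they coincide up to a translation: there exists τ ∈ ℝ^N such that u₂(x) = u₁(x + τ) and v₂(x) = v₁(x + τ) for all x ∈ ℝ^N. -/

import Mathlib

/-!
The proof is a sliding argument resting only on the maximum principle for `C²` functions; no
regularity theory or compactness of families of solutions is used.

*A priori bounds.* Nonnegative solutions are bounded (`keller_osserman`), hence have bounded
Laplacian, hence are globally Lipschitz (`lipschitz_of_bounded`, from Brandt's barrier argument for
increments, `brandt`).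

*Comparison.* For two solutions put `w = u₁ - u₂` and `z = v₂ - v₁`. The pair `(w, z)` solves a linear
cooperative system, and since `Λ > 1` the states `(1, 0)` and `(0, 1)` are stable. So `w, z ≥ 0` holds
everywhere once it holds at all points where neither `(u₁, v₁)` is close to `(1, 0)` nor `(u₂, v₂)` is
close to `(0, 1)` (`comparison`); lack of compactness in `x'` is handled by an Omori–Yau type
principle (`almost_min`).

*Sliding.* By (h∞), the translate of `(u₁, v₁)` by `t` in the direction `x_N` dominates `(u₂, v₂)` for
large `t` and not for very negative `t`. At the least admissible `t`, one of the two differences has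
infimum `0` over a strip `|x_N| ≤ M`; otherwise the Lipschitz bound and `comparison` would allow a
smaller `t` (`sliding`).

*One-dimensional symmetry.* Slide a horizontal translate of a solution over the solution itself. A
quantitative strong maximum principle (`propagation`) shows that if the critical `t` were nonzero,
then on arbitrarily large balls centred in the strip one component would be almost invariant under a
translation that moves `x_N`, which its different limits at `±∞` forbid (`no_almost_period`). So
`t = 0`, and solutions depend on `x_N` only (`one_dim`).

*Uniqueness.* For two solutions depending only on `x_N`, the infimum over the strip at the critical
`t` is attained, and the strong maximum principle forces the two to coincide (`rigidity`).
-/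

open scoped RealInnerProductSpace
open Filter

noncomputable section

/-- The Laplacian of `f : ℝ^N → ℝ`, as the sum of the pure second partial
derivatives in the coordinate directions. -/
def lap (N : ℕ) (f : EuclideanSpace ℝ (Fin N) → ℝ) (x : EuclideanSpace ℝ (Fin N)) : ℝ :=
  ∑ i : Fin N,
    fderiv ℝ (fun y => fderiv ℝ f y (EuclideanSpace.single i 1)) x (EuclideanSpace.single i 1)

/-- `(u, v)` is a classical solution of the system `(P_Λ)` on `ℝ^N`:
`u, v` are `C²` and `-Δu = u - u³ - Λ u v²`, `-Δv = v - v³ - Λ u² v` pointwise. -/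
def IsSolution (N : ℕ) (Λ : ℝ) (u v : EuclideanSpace ℝ (Fin N) → ℝ) : Prop :=
  ContDiff ℝ 2 u ∧ ContDiff ℝ 2 v ∧
  (∀ x, -lap N u x = u x - (u x) ^ 3 - Λ * u x * (v x) ^ 2) ∧
  (∀ x, -lap N v x = v x - (v x) ^ 3 - Λ * (u x) ^ 2 * v x)

/-- Condition `(h∞)`: `u → 1`, `v → 0` as `x_N → +∞` and `u → 0`, `v → 1` as
`x_N → -∞`, uniformly with respect to `x' ∈ ℝ^{N-1}` (the dimension is `N + 1`). -/
def Hinf (N : ℕ) (u v : EuclideanSpace ℝ (Fin (N + 1)) → ℝ) : Prop :=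
  (∀ ε : ℝ, 0 < ε → ∃ M : ℝ, ∀ x : EuclideanSpace ℝ (Fin (N + 1)),
    M ≤ x (Fin.last N) → |u x - 1| < ε ∧ |v x| < ε) ∧
  (∀ ε : ℝ, 0 < ε → ∃ M : ℝ, ∀ x : EuclideanSpace ℝ (Fin (N + 1)),
    x (Fin.last N) ≤ M → |u x| < ε ∧ |v x - 1| < ε)

/-! ### Second order calculus along lines -/

/-- Second-derivative necessary condition at a local minimum on the line. -/
lemma second_deriv_nonneg {g g' : ℝ → ℝ} {c : ℝ}
    (hg : ∀ᶠ t in nhds (0 : ℝ), HasDerivAt g (g' t) t)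
    (hg' : HasDerivAt g' c 0) (hmin : IsLocalMin g 0) : 0 ≤ c := by
  by_contra hc
  push Not at hc
  have h0 : g' 0 = 0 := hmin.hasDerivAt_eq_zero hg.self_of_nhds
  have hd : deriv g =ᶠ[nhds 0] g' := hg.mono fun t ht => ht.deriv
  have hdd : deriv (deriv g) 0 = c := by
    rw [hd.deriv_eq]; exact hg'.deriv
  have hmax : IsLocalMax g 0 := by
    apply isLocalMax_of_deriv_deriv_neg
    · rw [hdd]; exact hc
    · rw [hd.self_of_nhds, h0]
    · exact hg.self_of_nhds.continuousAt
  -- a point that is both a local minimum and a local maximum: `g` is locally constant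
  have hconst : g =ᶠ[nhds 0] fun _ => g 0 := by
    filter_upwards [hmin, hmax] with t h1 h2
    exact le_antisymm h2 h1
  have h1 : deriv g =ᶠ[nhds 0] fun _ => 0 := by
    have := hconst.deriv
    simpa using this
  have h2 : deriv (deriv g) 0 = 0 := by
    rw [h1.deriv_eq]; simp
  linarith

/-- The pure second derivative in the `i`-th coordinate direction, so that
`lap d f x = ∑ i, pd2 d f i x`. -/
def pd2 (d : ℕ) (f : EuclideanSpace ℝ (Fin d) → ℝ) (i : Fin d)
    (x : EuclideanSpace ℝ (Fin d)) : ℝ :=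
  fderiv ℝ (fun y => fderiv ℝ f y (EuclideanSpace.single i 1)) x (EuclideanSpace.single i 1)

lemma lap_eq_sum (d : ℕ) (f : EuclideanSpace ℝ (Fin d) → ℝ) (x : EuclideanSpace ℝ (Fin d)) :
    lap d f x = ∑ i, pd2 d f i x := rfl

lemma hasDerivAt_line {d : ℕ} {f : EuclideanSpace ℝ (Fin d) → ℝ} (hf : Differentiable ℝ f)
    (x e : EuclideanSpace ℝ (Fin d)) (t : ℝ) :
    HasDerivAt (fun t : ℝ => f (x + t • e)) (fderiv ℝ f (x + t • e) e) t := by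
  have h1 : HasDerivAt (fun t : ℝ => x + t • e) e t := by
    have := ((hasDerivAt_id t).smul_const e).const_add x
    simpa using this
  exact (hf (x + t • e)).hasFDerivAt.comp_hasDerivAt t h1

lemma differentiable_partial {d : ℕ} {f : EuclideanSpace ℝ (Fin d) → ℝ} (hf : ContDiff ℝ 2 f)
    (e : EuclideanSpace ℝ (Fin d)) : Differentiable ℝ (fun y => fderiv ℝ f y e) := by
  have h1 : ContDiff ℝ 1 (fderiv ℝ f) := hf.fderiv_right (by norm_num)
  exact (h1.differentiable (by norm_num)).clm_apply (differentiable_const e)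

lemma hasDerivAt_line' {d : ℕ} {f : EuclideanSpace ℝ (Fin d) → ℝ} (hf : ContDiff ℝ 2 f)
    (x : EuclideanSpace ℝ (Fin d)) (i : Fin d) :
    HasDerivAt (fun t : ℝ => fderiv ℝ f (x + t • EuclideanSpace.single i 1)
      (EuclideanSpace.single i 1)) (pd2 d f i x) 0 := by
  have := hasDerivAt_line (differentiable_partial hf (EuclideanSpace.single i 1)) x
    (EuclideanSpace.single i 1) 0
  simpa [pd2] using this

lemma lap_sub {d : ℕ} {f g : EuclideanSpace ℝ (Fin d) → ℝ} (hf : ContDiff ℝ 2 f)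
    (hg : ContDiff ℝ 2 g) (x : EuclideanSpace ℝ (Fin d)) :
    lap d (fun y => f y - g y) x = lap d f x - lap d g x := by
  have hf1 := hf.differentiable (by norm_num)
  have hg1 := hg.differentiable (by norm_num)
  simp only [lap, ← Finset.sum_sub_distrib]
  refine Finset.sum_congr rfl fun i _ => ?_
  have h1 : (fun y => fderiv ℝ (fun y => f y - g y) y (EuclideanSpace.single i 1)) =
      fun y => fderiv ℝ f y (EuclideanSpace.single i 1)
        - fderiv ℝ g y (EuclideanSpace.single i 1) := by
    funext y
    rw [fderiv_fun_sub (hf1 y) (hg1 y)]; rfl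
  rw [h1, fderiv_fun_sub (differentiable_partial hf _ x) (differentiable_partial hg _ x)]
  rfl

lemma lap_neg {d : ℕ} {f : EuclideanSpace ℝ (Fin d) → ℝ} (hf : ContDiff ℝ 2 f)
    (x : EuclideanSpace ℝ (Fin d)) :
    lap d (fun y => - f y) x = - lap d f x := by
  have h := lap_sub (f := fun _ => (0 : ℝ)) contDiff_const hf x
  have h0 : lap d (fun _ => (0 : ℝ)) x = 0 := by simp [lap]
  rw [h0] at h
  simpa using h

lemma lap_translate {d : ℕ} (f : EuclideanSpace ℝ (Fin d) → ℝ)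
    (s x : EuclideanSpace ℝ (Fin d)) :
    lap d (fun y => f (y + s)) x = lap d f (x + s) := by
  simp only [lap]
  refine Finset.sum_congr rfl fun i _ => ?_
  have h1 : (fun y => fderiv ℝ (fun y => f (y + s)) y (EuclideanSpace.single i 1)) =
      fun y => (fun y => fderiv ℝ f y (EuclideanSpace.single i 1)) (y + s) := by
    funext y
    rw [fderiv_comp_add_right]
  rw [h1, fderiv_comp_add_right (f := fun y => fderiv ℝ f y (EuclideanSpace.single i 1))]

lemma norm_sq_line {d : ℕ} (x y : EuclideanSpace ℝ (Fin d)) (i : Fin d) (t : ℝ) :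
    ‖x + t • EuclideanSpace.single i (1 : ℝ) - y‖ ^ 2
      = ‖x - y‖ ^ 2 + 2 * t * (x i - y i) + t ^ 2 := by
  have : x + t • EuclideanSpace.single i (1 : ℝ) - y
      = (x - y) + t • EuclideanSpace.single i (1 : ℝ) := by abel
  rw [this, norm_add_sq_real]
  simp [inner_smul_right, norm_smul, EuclideanSpace.inner_single_right]
  ring

/-- If a radial function `z ↦ G (‖z - y‖²)` touches `f` from below at `x` (up to an additive
constant), then its Laplacian at `x`, namely `4 G'' s + 2 d G'` with `s = ‖x - y‖²`, is at most
that of `f`. -/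
lemma lap_ge_of_touch {d : ℕ} {f : EuclideanSpace ℝ (Fin d) → ℝ} (hf : ContDiff ℝ 2 f)
    (x y : EuclideanSpace ℝ (Fin d)) {G G' : ℝ → ℝ} {G2 : ℝ}
    (hG : ∀ᶠ s in nhds (‖x - y‖ ^ 2), HasDerivAt G (G' s) s)
    (hG' : HasDerivAt G' G2 (‖x - y‖ ^ 2))
    (hmin : IsLocalMin (fun z => f z - G (‖z - y‖ ^ 2)) x) :
    4 * G2 * ‖x - y‖ ^ 2 + 2 * d * G' (‖x - y‖ ^ 2) ≤ lap d f x := by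
  set s := ‖x - y‖ ^ 2 with hs
  have key : ∀ i : Fin d, 4 * G2 * (x i - y i) ^ 2 + 2 * G' s ≤ pd2 d f i x := by
    intro i
    set a := x i - y i
    set e : EuclideanSpace ℝ (Fin d) := EuclideanSpace.single i 1 with he
    set q : ℝ → ℝ := fun t => s + 2 * t * a + t ^ 2 with hq
    have hq0 : q 0 = s := by simp [hq]
    have hqd : ∀ t, HasDerivAt q (2 * a + 2 * t) t := by
      intro t
      have h1 : HasDerivAt (fun t : ℝ => 2 * t * a) (2 * a) t := by
        simpa using ((hasDerivAt_id t).const_mul 2).mul_const a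
      have h2 : HasDerivAt (fun t : ℝ => t ^ 2) (2 * t) t := by
        simpa using hasDerivAt_pow 2 t
      exact (h1.const_add s).add h2
    have hqc : Tendsto q (nhds 0) (nhds s) := by
      rw [← hq0]; exact (hqd 0).continuousAt
    have hline : Tendsto (fun t : ℝ => x + t • e) (nhds 0) (nhds x) := by
      have : Continuous (fun t : ℝ => x + t • e) := by fun_prop
      simpa using this.tendsto 0
    have hmin' : IsLocalMin (fun t : ℝ => f (x + t • e) - G (q t)) 0 := by
      have h := hline.eventually hmin
      refine h.mono fun t ht => ?_
      simp only [zero_smul, add_zero, hq0]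
      have h2 := norm_sq_line x y i t
      rw [← he] at h2
      simp only [h2] at ht
      exact ht
    have hd1 : ∀ᶠ t in nhds (0 : ℝ), HasDerivAt (fun t : ℝ => f (x + t • e) - G (q t))
        (fderiv ℝ f (x + t • e) e - G' (q t) * (2 * a + 2 * t)) t := by
      filter_upwards [hqc.eventually hG] with t ht
      exact (hasDerivAt_line (hf.differentiable (by norm_num)) x e t).sub
        (ht.comp t (hqd t))
    have hd2 : HasDerivAt (fun t : ℝ => fderiv ℝ f (x + t • e) e - G' (q t) * (2 * a + 2 * t))
        (pd2 d f i x - (G2 * (2 * a) * (2 * a) + G' s * 2)) 0 := by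
      have h1 : HasDerivAt (fun t => G' (q t)) (G2 * (2 * a)) 0 := by
        have hG'' : HasDerivAt G' G2 (q 0) := by rw [hq0]; exact hG'
        have := hG''.comp (0 : ℝ) (hqd 0)
        rw [mul_zero, add_zero] at this
        exact this
      have h2 : HasDerivAt (fun t : ℝ => 2 * a + 2 * t) 2 0 := by
        simpa using ((hasDerivAt_id (0 : ℝ)).const_mul 2).const_add (2 * a)
      have h3 := h1.mul h2
      have h4 := (hasDerivAt_line' hf x i).sub h3
      rw [hq0, mul_zero, add_zero] at h4
      exact h4
    have := second_deriv_nonneg hd1 hd2 hmin'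
    linarith
  have hsum : s = ∑ i, (x i - y i) ^ 2 := by
    rw [hs, EuclideanSpace.norm_sq_eq]
    simp
  calc 4 * G2 * s + 2 * d * G' s = ∑ i : Fin d, (4 * G2 * (x i - y i) ^ 2 + 2 * G' s) := by
        rw [Finset.sum_add_distrib, ← Finset.mul_sum, ← hsum]; simp; ring
    _ ≤ ∑ i, pd2 d f i x := Finset.sum_le_sum fun i _ => key i
    _ = lap d f x := (lap_eq_sum d f x).symm

/-! ### Maximum-principle estimates -/

/-- An Omori–Yau type principle: a `C²` function that is bounded below has, near any almost
minimal point, an almost minimal point where its Laplacian is almost nonnegative. -/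
lemma almost_min {d : ℕ} {f : EuclideanSpace ℝ (Fin d) → ℝ} (hf : ContDiff ℝ 2 f) {m ε : ℝ}
    (hb : ∀ x, -m ≤ f x) (hε : 0 < ε) (x0 : EuclideanSpace ℝ (Fin d))
    (hx0 : f x0 < -m + ε) : ∃ x, f x < -m + ε ∧ -(4 * d * ε) ≤ lap d f x := by
  set F : EuclideanSpace ℝ (Fin d) → ℝ := fun z => f z - (-(2 * ε)) * (‖z - x0‖ ^ 2) with hF
  have hFc : Continuous F := by
    have := hf.continuous
    fun_prop
  obtain ⟨p, hp, hpmin⟩ := (isCompact_closedBall x0 1).exists_isMinOn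
    ⟨x0, Metric.mem_closedBall_self zero_le_one⟩ hFc.continuousOn
  have h1 : F p ≤ f x0 := by
    have := hpmin (Metric.mem_closedBall_self (x := x0) zero_le_one)
    simpa [hF] using this
  have hlt : ‖p - x0‖ < 1 := by
    by_contra hge
    push Not at hge
    have h2 : 1 ≤ ‖p - x0‖ ^ 2 := one_le_pow₀ hge
    have h3 : f p + 2 * ε * ‖p - x0‖ ^ 2 ≤ f x0 := by
      have := h1; simp only [hF] at this; linarith
    nlinarith [hb p]
  have hloc : IsLocalMin F p := by
    apply hpmin.isLocalMin
    apply mem_of_superset (Metric.isOpen_ball.mem_nhds (x := p) _) Metric.ball_subset_closedBall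
    rwa [Metric.mem_ball, dist_eq_norm]
  have htouch := lap_ge_of_touch hf p x0 (G := fun s => (-(2 * ε)) * s) (G' := fun _ => -(2 * ε))
    (G2 := 0) (Eventually.of_forall fun s => by simpa using (hasDerivAt_id s).const_mul (-(2 * ε)))
    (hasDerivAt_const _ _) hloc
  refine ⟨p, ?_, by linarith⟩
  have h3 : f p + 2 * ε * ‖p - x0‖ ^ 2 ≤ f x0 := by
    have := h1; simp only [hF] at this; linarith
  have : 0 ≤ 2 * ε * ‖p - x0‖ ^ 2 := by positivity
  linarith

/-- A quantitative strong maximum principle: a nonnegative Lipschitz supersolution of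
`Δw = K w` which is small at a point is small on any ball around it, uniformly in the point.
The barrier is `exp (-α ‖· - y‖²)` on an annulus. -/
lemma propagation {d : ℕ} {w : EuclideanSpace ℝ (Fin d) → ℝ} (hw : ContDiff ℝ 2 w) {K L : ℝ}
    (hK : 0 ≤ K) (hL : 0 < L) (hnn : ∀ x, 0 ≤ w x) (hlap : ∀ x, lap d w x ≤ K * w x)
    (hlip : ∀ x y, |w x - w y| ≤ L * ‖x - y‖) {R ε : ℝ} (hR : 0 ≤ R) (hε : 0 < ε) :
    ∃ δ > 0, ∀ x y, ‖x - y‖ ≤ R → w x < δ → w y < ε := by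
  set r : ℝ := ε / (2 * L) with hr
  have hrpos : 0 < r := by positivity
  set α : ℝ := (2 * d + K + 1) / (4 * r ^ 2) + 1 with hα
  have hα1 : 1 ≤ α := by
    have : 0 ≤ (2 * d + K + 1) / (4 * r ^ 2) := by positivity
    linarith
  have hαr : 2 * α * d + K + 1 ≤ 4 * α ^ 2 * r ^ 2 := by
    have h1 : 2 * d + K + 1 ≤ 4 * α * r ^ 2 := by
      have : 4 * α * r ^ 2 = (2 * d + K + 1) + 4 * r ^ 2 := by
        rw [hα]; field_simp
      rw [this]; nlinarith [sq_nonneg r]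
    have h2 : α * (2 * d + K + 1) ≤ α * (4 * α * r ^ 2) := by gcongr
    nlinarith
  have hαpos : 0 < α := by linarith
  set c : ℝ := Real.exp (-α * (R + 1) ^ 2) with hc
  have hcpos : 0 < c := Real.exp_pos _
  set G : ℝ → ℝ := fun s => ε / 2 * (Real.exp (-α * s) - c) with hG
  have hGd : ∀ s, HasDerivAt G (ε / 2 * (Real.exp (-α * s) * (-α))) s := by
    intro s
    have h1 : HasDerivAt (fun s : ℝ => -α * s) (-α) s := by
      simpa using (hasDerivAt_id s).const_mul (-α)
    exact (h1.exp.sub_const c).const_mul (ε / 2)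
  have hGd2 : ∀ s, HasDerivAt (fun s => ε / 2 * (Real.exp (-α * s) * (-α)))
      (ε / 2 * (Real.exp (-α * s) * (-α) * (-α))) s := by
    intro s
    have h1 : HasDerivAt (fun s : ℝ => -α * s) (-α) s := by
      simpa using (hasDerivAt_id s).const_mul (-α)
    exact (h1.exp.mul_const (-α)).const_mul (ε / 2)
  have hGanti : ∀ s t, s ≤ t → G t ≤ G s := by
    intro s t hst
    simp only [hG]
    have : Real.exp (-α * t) ≤ Real.exp (-α * s) := Real.exp_le_exp.mpr (by nlinarith)
    gcongr
  refine ⟨G (R ^ 2), ?_, ?_⟩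
  · have : c < Real.exp (-α * R ^ 2) := Real.exp_lt_exp.mpr (by nlinarith)
    have : 0 < Real.exp (-α * R ^ 2) - c := by linarith
    simp only [hG]; positivity
  intro x y hxy hwx
  by_contra hwy
  push Not at hwy
  set F : EuclideanSpace ℝ (Fin d) → ℝ := fun z => w z - G (‖z - y‖ ^ 2) with hF
  have hFc : Continuous F := by
    have := hw.continuous
    simp only [hF, hG]
    fun_prop
  have hxmem : x ∈ Metric.closedBall y (R + 1) := by
    rw [Metric.mem_closedBall, dist_eq_norm]; linarith
  obtain ⟨p, hp, hpmin⟩ := (isCompact_closedBall y (R + 1)).exists_isMinOn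
    ⟨x, hxmem⟩ hFc.continuousOn
  have hpneg : w p < G (‖p - y‖ ^ 2) := by
    have h1 : F p ≤ F x := hpmin hxmem
    have h2 : G (R ^ 2) ≤ G (‖x - y‖ ^ 2) := hGanti _ _ (by gcongr)
    simp only [hF] at h1
    linarith
  have hlt : ‖p - y‖ < R + 1 := by
    by_contra hge
    push Not at hge
    have h1 : G (‖p - y‖ ^ 2) ≤ G ((R + 1) ^ 2) := hGanti _ _ (by gcongr)
    have h2 : G ((R + 1) ^ 2) = 0 := by simp [hG, hc]
    linarith [hnn p]
  have hgt : r < ‖p - y‖ := by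
    by_contra hle
    push Not at hle
    have h1 := (abs_le.mp (hlip p y)).1
    have h2 : L * ‖p - y‖ ≤ ε / 2 := by
      calc L * ‖p - y‖ ≤ L * r := by gcongr
        _ = ε / 2 := by rw [hr]; field_simp
    have h3 : G (‖p - y‖ ^ 2) ≤ ε / 2 := by
      have : Real.exp (-α * ‖p - y‖ ^ 2) ≤ 1 := Real.exp_le_one_iff.mpr (by
        have : 0 ≤ α * ‖p - y‖ ^ 2 := by positivity
        linarith)
      simp only [hG]
      nlinarith
    linarith
  have hloc : IsLocalMin F p := by
    apply hpmin.isLocalMin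
    apply mem_of_superset (Metric.isOpen_ball.mem_nhds (x := p) _) Metric.ball_subset_closedBall
    rwa [Metric.mem_ball, dist_eq_norm]
  have htouch := lap_ge_of_touch hw p y (Eventually.of_forall hGd) (hGd2 _) hloc
  set s := ‖p - y‖ ^ 2 with hs
  have hsr : r ^ 2 ≤ s := by rw [hs]; gcongr
  set X := Real.exp (-α * s) with hX
  have hXpos : 0 < X := Real.exp_pos _
  have h1 : K * w p ≤ K * (ε / 2 * X) := by
    have : G s ≤ ε / 2 * X := by simp only [hG]; nlinarith
    gcongr
    linarith
  have h2 : (ε / 2 * X) * (4 * α ^ 2 * s - 2 * α * d - K) ≤ 0 := by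
    have := (htouch.trans (hlap p)).trans h1
    linarith
  have h3 : 1 ≤ 4 * α ^ 2 * s - 2 * α * d - K := by
    have : 4 * α ^ 2 * r ^ 2 ≤ 4 * α ^ 2 * s := by gcongr
    linarith
  have h4 : 0 < ε / 2 * X := by positivity
  nlinarith

/-- Keller–Osserman bound: a nonnegative `u` with `Δu ≥ u³ - u` on the whole space is bounded.
The comparison function on the unit ball around `y` is `A / (1 - ‖· - y‖²)`. -/
lemma keller_osserman {d : ℕ} {u : EuclideanSpace ℝ (Fin d) → ℝ} (hu : ContDiff ℝ 2 u)
    (hnn : ∀ x, 0 ≤ u x) (hlap : ∀ x, u x ^ 3 - u x ≤ lap d u x) (y : EuclideanSpace ℝ (Fin d)) :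
    u y ≤ 9 + 2 * d := by
  set H : EuclideanSpace ℝ (Fin d) → ℝ := fun z => (1 - ‖z - y‖ ^ 2) * u z with hH
  have hHc : Continuous H := by
    have := hu.continuous
    simp only [hH]; fun_prop
  have hymem : y ∈ Metric.closedBall y 1 := Metric.mem_closedBall_self zero_le_one
  obtain ⟨p, hp, hpmax⟩ := (isCompact_closedBall y 1).exists_isMaxOn ⟨y, hymem⟩ hHc.continuousOn
  set A := H p with hA
  have hyA : u y ≤ A := by
    have : H y ≤ H p := hpmax hymem
    simpa [hH] using this
  by_contra hcon
  push Not at hcon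
  have hd0 : (0 : ℝ) ≤ d := Nat.cast_nonneg d
  have hA9 : 9 + 2 * d < A := lt_of_lt_of_le hcon hyA
  have hApos : 0 < A := by linarith
  set s := ‖p - y‖ ^ 2 with hs
  have hs0 : 0 ≤ s := by positivity
  have hs1 : s < 1 := by
    by_contra hge
    push Not at hge
    have : (1 - s) * u p ≤ 0 := mul_nonpos_of_nonpos_of_nonneg (by linarith) (hnn p)
    have h2 : A = (1 - s) * u p := rfl
    linarith
  have hlt : ‖p - y‖ < 1 := by
    by_contra hge
    push Not at hge
    have : 1 ≤ ‖p - y‖ ^ 2 := one_le_pow₀ hge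
    linarith
  have hup : u p = A * (1 - s)⁻¹ := by
    have h2 : A = (1 - s) * u p := rfl
    have : 1 - s ≠ 0 := by linarith
    rw [h2]; field_simp
  have hd1 : ∀ t : ℝ, t < 1 → HasDerivAt (fun t : ℝ => -A * (1 - t)⁻¹)
      (-A * ((1 - t) ^ 2)⁻¹) t := by
    intro t ht
    have h1 : HasDerivAt (fun t : ℝ => 1 - t) (-1) t := by
      simpa using (hasDerivAt_id t).const_sub 1
    have h2 := (h1.inv (by linarith : (1 - t) ≠ 0)).const_mul (-A)
    refine h2.congr_deriv ?_
    simp [div_eq_mul_inv]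
  have hd2 : HasDerivAt (fun t : ℝ => -A * ((1 - t) ^ 2)⁻¹)
      (-A * (2 * ((1 - s) ^ 3)⁻¹)) s := by
    have h0 : 1 - s ≠ 0 := by linarith
    have h1 : HasDerivAt (fun t : ℝ => 1 - t) (-1) s := by
      simpa using (hasDerivAt_id s).const_sub 1
    have h2 := ((h1.pow 2).inv (pow_ne_zero 2 h0)).const_mul (-A)
    refine h2.congr_deriv ?_
    simp only [Pi.pow_apply]
    push_cast
    field_simp
  have hloc : IsLocalMin (fun z => (- u z) - (-A * (1 - ‖z - y‖ ^ 2)⁻¹)) p := by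
    have hmem : Metric.ball y 1 ∈ nhds p := by
      apply Metric.isOpen_ball.mem_nhds
      rwa [Metric.mem_ball, dist_eq_norm]
    filter_upwards [hmem] with z hz
    have hz' : ‖z - y‖ < 1 := by rwa [Metric.mem_ball, dist_eq_norm] at hz
    have hz2 : 0 < 1 - ‖z - y‖ ^ 2 := by nlinarith [norm_nonneg (z - y)]
    have h1 : (1 - ‖z - y‖ ^ 2) * u z ≤ A := hpmax (Metric.ball_subset_closedBall hz)
    have h2 : u z ≤ A * (1 - ‖z - y‖ ^ 2)⁻¹ := by
      rw [← div_eq_mul_inv, le_div_iff₀ hz2]; linarith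
    have h3 : - u p - (-A * (1 - s)⁻¹) = 0 := by rw [hup]; ring
    rw [h3]
    linarith
  have htouch := lap_ge_of_touch hu.neg p y (G := fun t : ℝ => -A * (1 - t)⁻¹)
    (G' := fun t : ℝ => -A * ((1 - t) ^ 2)⁻¹)
    (by filter_upwards [Iio_mem_nhds hs1] with t ht using hd1 t ht) hd2 hloc
  rw [lap_neg hu] at htouch
  have hl := hlap p
  set q := (1 - s)⁻¹ with hq
  have hq1 : 1 ≤ q := (one_le_inv₀ (by linarith)).mpr (by linarith)
  have h2 : ((1 - s) ^ 2)⁻¹ = q ^ 2 := by rw [hq, inv_pow]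
  have h3 : ((1 - s) ^ 3)⁻¹ = q ^ 3 := by rw [hq, inv_pow]
  simp only [← hs, h2, h3] at htouch
  rw [hup] at hl
  have e1 : A ^ 3 * q ^ 3 ≤ A * q + 8 * A * q ^ 3 * s + 2 * d * A * q ^ 2 := by nlinarith
  have hAq : 0 < A * q ^ 3 := by positivity
  have e2 : A * q ≤ A * q ^ 3 := by
    have : q ≤ q ^ 3 := le_self_pow₀ hq1 (by norm_num)
    gcongr
  have e3 : 8 * A * q ^ 3 * s ≤ 8 * (A * q ^ 3) := by nlinarith
  have e4 : 2 * d * A * q ^ 2 ≤ 2 * d * (A * q ^ 3) := by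
    have : q ^ 2 ≤ q ^ 3 := pow_le_pow_right₀ hq1 (by norm_num)
    have h : 2 * d * A * q ^ 2 ≤ 2 * d * A * q ^ 3 := by gcongr
    linarith
  have e5 : (A * q ^ 3) * (A ^ 2 - (9 + 2 * d)) ≤ 0 := by nlinarith
  have e6 : 0 < A ^ 2 - (9 + 2 * d) := by nlinarith
  nlinarith [mul_pos hAq e6]

/-! ### A Lipschitz estimate for functions with bounded Laplacian -/

/-- Brandt's interior estimate: a barrier argument for `u (x + z eᵢ) - u (x - z eᵢ)` as a
function of `(x, z)`. The operator annihilating the increment up to `Δu` weighs the `i`-th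
second derivative and the second `z`-derivative by one half each. -/
lemma brandt {d : ℕ} {u : EuclideanSpace ℝ (Fin d) → ℝ} (hu : ContDiff ℝ 2 u) {B C : ℝ}
    (hB : ∀ x, |u x| ≤ B) (hC : ∀ x, |lap d u x| ≤ C) (i : Fin d)
    (x0 : EuclideanSpace ℝ (Fin d)) {z0 : ℝ} (hz0 : 0 ≤ z0) (hz1 : z0 ≤ 1) :
    u (x0 + z0 • EuclideanSpace.single i 1) - u (x0 - z0 • EuclideanSpace.single i 1)
      ≤ (4 * B * d + 2 * C + 1 + 2 * B) * z0 := by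
  have hB0 : 0 ≤ B := (abs_nonneg _).trans (hB x0)
  have hC0 : 0 ≤ C := (abs_nonneg _).trans (hC x0)
  set e : EuclideanSpace ℝ (Fin d) := EuclideanSpace.single i 1 with he
  set a : ℝ := 2 * B with ha
  set c : ℝ := 2 * a * d + 2 * C + 1 with hc
  have hc0 : 0 < c := by positivity
  set b : ℝ := c + 2 * B with hb
  have hbb : 4 * B * d + 2 * C + 1 + 2 * B = b := by rw [hb, hc, ha]; ring
  rw [hbb]
  set F : EuclideanSpace ℝ (Fin d) × ℝ → ℝ := fun q =>
    a * ‖q.1 - x0‖ ^ 2 + b * q.2 - c * q.2 ^ 2 - (u (q.1 + q.2 • e) - u (q.1 - q.2 • e)) with hF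
  have hFc : Continuous F := by
    have := hu.continuous
    simp only [hF]; fun_prop
  have hkey : 0 ≤ F (x0, z0) := by
    by_contra hneg
    push Not at hneg
    have hmem : (x0, z0) ∈ Metric.closedBall x0 1 ×ˢ Set.Icc (0 : ℝ) 1 :=
      ⟨Metric.mem_closedBall_self zero_le_one, hz0, hz1⟩
    obtain ⟨⟨p, z⟩, hp, hpmin⟩ := ((isCompact_closedBall x0 1).prod
      (isCompact_Icc (a := (0 : ℝ)) (b := 1))).exists_isMinOn ⟨_, hmem⟩ hFc.continuousOn
    have hFp : F (p, z) < 0 := lt_of_le_of_lt (hpmin hmem) hneg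
    obtain ⟨hp1, hzz0, hzz1⟩ := hp
    simp only at hp1 hzz0 hzz1
    have hinc : u (p + z • e) - u (p - z • e) ≤ 2 * B := by
      have h1 := (abs_le.mp (hB (p + z • e))).2
      have h2 := (abs_le.mp (hB (p - z • e))).1
      linarith
    have hquad : 0 ≤ a * ‖p - x0‖ ^ 2 := by positivity
    have hzpos : 0 < z := by
      rcases hzz0.lt_or_eq with h | h
      · exact h
      · exfalso
        subst h
        simp [hF] at hFp
        linarith
    have hzlt : z < 1 := by
      rcases hzz1.lt_or_eq with h | h
      · exact h
      · exfalso
        subst h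
        simp only [hF] at hFp
        linarith
    have hplt : ‖p - x0‖ < 1 := by
      by_contra hge
      push Not at hge
      have h1 : 1 ≤ ‖p - x0‖ ^ 2 := one_le_pow₀ hge
      have h2 : a * 1 ≤ a * ‖p - x0‖ ^ 2 := by gcongr
      have h3 : 0 ≤ b * z - c * z ^ 2 := by
        have e1 : b * z - c * z ^ 2 = c * (z * (1 - z)) + 2 * B * z := by rw [hb]; ring
        have e2 : 0 ≤ 1 - z := by linarith
        rw [e1]; positivity
      simp only [hF] at hFp
      linarith
    have hloc : IsLocalMin F (p, z) := by
      apply hpmin.isLocalMin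
      apply prod_mem_nhds
      · apply mem_of_superset (Metric.isOpen_ball.mem_nhds (x := p) _)
          Metric.ball_subset_closedBall
        rwa [Metric.mem_ball, dist_eq_norm]
      · exact Icc_mem_nhds hzpos hzlt
    have hu1 : Differentiable ℝ u := hu.differentiable (by norm_num)
    -- second derivative test in the direction `e_j` of the space variable
    have hspace : ∀ j : Fin d,
        pd2 d u j (p + z • e) - pd2 d u j (p - z • e) ≤ 2 * a := by
      intro j
      set f : EuclideanSpace ℝ (Fin d) := EuclideanSpace.single j 1 with hf
      set k := p j - x0 j
      set g : ℝ → ℝ := fun t => a * (‖p - x0‖ ^ 2 + 2 * t * k + t ^ 2) + (b * z - c * z ^ 2)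
        - (u ((p + z • e) + t • f) - u ((p - z • e) + t • f)) with hg
      have hgmin : IsLocalMin g 0 := by
        have hline : Tendsto (fun t : ℝ => (p + t • f, z)) (nhds 0) (nhds (p, z)) := by
          have : Continuous (fun t : ℝ => (p + t • f, z)) := by fun_prop
          simpa using this.tendsto 0
        have hgF : ∀ t, g t = F (p + t • f, z) := by
          intro t
          simp only [hg, hF]
          rw [hf, norm_sq_line, ← hf]
          rw [show p + z • e + t • f = p + t • f + z • e by abel,
            show p - z • e + t • f = p + t • f - z • e by abel]
          ring
        refine (hline.eventually hloc).mono fun t ht => ?_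
        rw [hgF, hgF]
        simpa using ht
      have hq : ∀ t, HasDerivAt (fun t : ℝ => ‖p - x0‖ ^ 2 + 2 * t * k + t ^ 2)
          (2 * k + 2 * t) t := by
        intro t
        have h1 : HasDerivAt (fun t : ℝ => 2 * t * k) (2 * k) t := by
          simpa using ((hasDerivAt_id t).const_mul 2).mul_const k
        have h2 : HasDerivAt (fun t : ℝ => t ^ 2) (2 * t) t := by
          simpa using hasDerivAt_pow 2 t
        exact (h1.const_add _).add h2
      have hd1 : ∀ t, HasDerivAt g (a * (2 * k + 2 * t) -
          (fderiv ℝ u ((p + z • e) + t • f) f - fderiv ℝ u ((p - z • e) + t • f) f)) t := by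
        intro t
        exact (((hq t).const_mul a).add_const _).sub
          ((hasDerivAt_line hu1 (p + z • e) f t).sub (hasDerivAt_line hu1 (p - z • e) f t))
      have hd2 : HasDerivAt (fun t : ℝ => a * (2 * k + 2 * t) -
          (fderiv ℝ u ((p + z • e) + t • f) f - fderiv ℝ u ((p - z • e) + t • f) f))
          (a * 2 - (pd2 d u j (p + z • e) - pd2 d u j (p - z • e))) 0 := by
        have h2 : HasDerivAt (fun t : ℝ => 2 * k + 2 * t) 2 0 := by
          simpa using ((hasDerivAt_id (0 : ℝ)).const_mul 2).const_add (2 * k)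
        exact (h2.const_mul a).sub ((hasDerivAt_line' hu _ j).sub (hasDerivAt_line' hu _ j))
      have := second_deriv_nonneg (Eventually.of_forall hd1) hd2 hgmin
      linarith
    -- second derivative test in the direction of the increment variable `z`
    have hincr : pd2 d u i (p + z • e) - pd2 d u i (p - z • e) ≤ -(2 * c) := by
      set g : ℝ → ℝ := fun t => a * ‖p - x0‖ ^ 2 + (b * (z + t) - c * (z + t) ^ 2)
        - (u ((p + z • e) + t • e) - u ((p - z • e) + (-t) • e)) with hg
      have hgmin : IsLocalMin g 0 := by
        have hline : Tendsto (fun t : ℝ => (p, z + t)) (nhds 0) (nhds (p, z)) := by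
          have : Continuous (fun t : ℝ => (p, z + t)) := by fun_prop
          simpa using this.tendsto 0
        have hgF : ∀ t, g t = F (p, z + t) := by
          intro t
          simp only [hg, hF]
          rw [show p + z • e + t • e = p + (z + t) • e by rw [add_smul, add_assoc],
            show p - z • e + (-t) • e = p - (z + t) • e by rw [add_smul, neg_smul]; abel]
          ring
        refine (hline.eventually hloc).mono fun t ht => ?_
        rw [hgF, hgF]
        simpa using ht
      have hneg : ∀ t : ℝ, HasDerivAt (fun t : ℝ => -t) (-1) t := fun t => hasDerivAt_neg t
      have hq : ∀ t, HasDerivAt (fun t : ℝ => b * (z + t) - c * (z + t) ^ 2)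
          (b - c * (2 * (z + t))) t := by
        intro t
        have h0 : HasDerivAt (fun t : ℝ => z + t) 1 t := by
          simpa using (hasDerivAt_id t).const_add z
        have h1 : HasDerivAt (fun t : ℝ => b * (z + t)) b t := by
          simpa using h0.const_mul b
        have h2 : HasDerivAt (fun t : ℝ => (z + t) ^ 2) (2 * (z + t)) t := by
          simpa using h0.fun_pow 2
        exact h1.sub (h2.const_mul c)
      have hd1 : ∀ t, HasDerivAt g ((b - c * (2 * (z + t))) -
          (fderiv ℝ u ((p + z • e) + t • e) e
            - fderiv ℝ u ((p - z • e) + (-t) • e) e * (-1))) t := by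
        intro t
        have h1 := (hasDerivAt_line hu1 (p - z • e) e (-t)).comp t (hneg t)
        exact ((hq t).const_add _).sub ((hasDerivAt_line hu1 (p + z • e) e t).sub h1)
      have hd2 : HasDerivAt (fun t : ℝ => (b - c * (2 * (z + t))) -
          (fderiv ℝ u ((p + z • e) + t • e) e
            - fderiv ℝ u ((p - z • e) + (-t) • e) e * (-1)))
          (-(c * 2) - (pd2 d u i (p + z • e) - pd2 d u i (p - z • e) * (-1) * (-1))) 0 := by
        have h2 : HasDerivAt (fun t : ℝ => b - c * (2 * (z + t))) (-(c * 2)) 0 := by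
          simpa using ((((hasDerivAt_id (0 : ℝ)).const_add z).const_mul 2).const_mul c).const_sub b
        have h3 : HasDerivAt (fun t : ℝ => fderiv ℝ u ((p - z • e) + t • e) e)
            (pd2 d u i (p - z • e)) (-0) := by
          rw [neg_zero]; exact hasDerivAt_line' hu _ i
        have h4 := (h3.comp (0 : ℝ) (hneg 0)).mul_const (-1)
        exact h2.sub ((hasDerivAt_line' hu _ i).sub h4)
      have := second_deriv_nonneg (Eventually.of_forall hd1) hd2 hgmin
      linarith
    have hsum : lap d u (p + z • e) - lap d u (p - z • e)
        ≤ ∑ j : Fin d, (2 * a - if j = i then a + c else 0) := by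
      rw [lap_eq_sum, lap_eq_sum, ← Finset.sum_sub_distrib]
      refine Finset.sum_le_sum fun j _ => ?_
      split_ifs with hji
      · subst hji
        linarith [hspace j]
      · linarith [hspace j]
    rw [Finset.sum_sub_distrib] at hsum
    simp at hsum
    have h1 := (abs_le.mp (hC (p + z • e))).1
    have h2 := (abs_le.mp (hC (p - z • e))).2
    have ha0 : 0 ≤ a := by positivity
    linarith
  simp only [hF, sub_self, norm_zero] at hkey
  nlinarith [sq_nonneg z0]

lemma lipschitz_of_bounded {d : ℕ} {u : EuclideanSpace ℝ (Fin d) → ℝ} (hu : ContDiff ℝ 2 u)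
    {B C : ℝ} (hB : ∀ x, |u x| ≤ B) (hC : ∀ x, |lap d u x| ≤ C) :
    ∃ L > 0, ∀ x y, |u x - u y| ≤ L * ‖x - y‖ := by
  have hB0 : 0 ≤ B := (abs_nonneg _).trans (hB 0)
  have hC0 : 0 ≤ C := (abs_nonneg _).trans (hC 0)
  set b : ℝ := 4 * B * d + 2 * C + 1 + 2 * B with hb
  have hbpos : 0 < b := by positivity
  have hbB : 2 * B ≤ b := by
    have : 0 ≤ 4 * B * d + 2 * C + 1 := by positivity
    linarith
  have hpos : ∀ (i : Fin d) (x : EuclideanSpace ℝ (Fin d)) (h : ℝ), 0 ≤ h →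
      |u (x + h • EuclideanSpace.single i 1) - u x| ≤ b * h := by
    intro i x h hh
    rcases le_total h 1 with h1 | h1
    · have e1 := brandt hu hB hC i (x + (h / 2) • EuclideanSpace.single i 1)
        (z0 := h / 2) (by linarith) (by linarith)
      have e2 := brandt (u := fun y => - u y) hu.neg (B := B) (C := C)
        (by intro y; rw [abs_neg]; exact hB y)
        (by intro y; rw [lap_neg hu, abs_neg]; exact hC y) i
        (x + (h / 2) • EuclideanSpace.single i 1) (z0 := h / 2) (by linarith) (by linarith)
      have r1 : x + (h / 2) • EuclideanSpace.single i (1 : ℝ) + (h / 2) • EuclideanSpace.single i 1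
          = x + h • EuclideanSpace.single i 1 := by
        rw [add_assoc, ← add_smul]; congr 2; ring
      have r2 : x + (h / 2) • EuclideanSpace.single i (1 : ℝ) - (h / 2) • EuclideanSpace.single i 1
          = x := by abel
      rw [r1, r2] at e1 e2
      rw [abs_le]
      have : b * (h / 2) ≤ b * h := by gcongr; linarith
      constructor <;> linarith
    · have e1 := abs_le.mp (hB (x + h • EuclideanSpace.single i 1))
      have e2 := abs_le.mp (hB x)
      have : b * 1 ≤ b * h := by gcongr
      rw [abs_le]
      constructor <;> linarith
  have hall : ∀ (i : Fin d) (x : EuclideanSpace ℝ (Fin d)) (h : ℝ),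
      |u (x + h • EuclideanSpace.single i 1) - u x| ≤ b * |h| := by
    intro i x h
    rcases le_total 0 h with h0 | h0
    · rw [abs_of_nonneg h0]; exact hpos i x h h0
    · have := hpos i (x + h • EuclideanSpace.single i 1) (-h) (by linarith)
      rw [show x + h • EuclideanSpace.single i (1 : ℝ) + (-h) • EuclideanSpace.single i 1 = x by
        rw [neg_smul]; abel] at this
      rw [abs_sub_comm, abs_of_nonpos h0]; exact this
  have hset : ∀ (S : Finset (Fin d)) (x h : EuclideanSpace ℝ (Fin d)),
      |u (x + ∑ i ∈ S, h i • EuclideanSpace.single i 1) - u x| ≤ b * ∑ i ∈ S, |h i| := by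
    intro S x h
    induction S using Finset.induction_on with
    | empty => simp
    | insert j S hj ih =>
      rw [Finset.sum_insert hj, Finset.sum_insert hj]
      have e1 := hall j (x + ∑ i ∈ S, h i • EuclideanSpace.single i 1) (h j)
      rw [show x + ∑ i ∈ S, h i • EuclideanSpace.single i (1 : ℝ) + h j • EuclideanSpace.single j 1
        = x + (h j • EuclideanSpace.single j 1 + ∑ i ∈ S, h i • EuclideanSpace.single i 1) by
          abel] at e1
      have e3 := abs_add_le (u (x + (h j • EuclideanSpace.single j (1 : ℝ)
          + ∑ i ∈ S, h i • EuclideanSpace.single i 1))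
          - u (x + ∑ i ∈ S, h i • EuclideanSpace.single i 1))
        (u (x + ∑ i ∈ S, h i • EuclideanSpace.single i 1) - u x)
      rw [sub_add_sub_cancel] at e3
      linarith
  refine ⟨b * (d + 1), by positivity, fun x y => ?_⟩
  have hdec : ∑ i, (x - y) i • EuclideanSpace.single i (1 : ℝ) = x - y := by
    ext j
    simp [Finset.sum_apply, Pi.single_apply]
  have h1 := hset Finset.univ y (x - y)
  rw [hdec, add_sub_cancel] at h1
  have h2 : ∑ i, |(x - y) i| ≤ d * ‖x - y‖ := by
    calc ∑ i, |(x - y) i| ≤ ∑ _i : Fin d, ‖x - y‖ :=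
          Finset.sum_le_sum fun i _ => PiLp.norm_apply_le (x - y) i
      _ = d * ‖x - y‖ := by simp
  calc |u x - u y| ≤ b * ∑ i, |(x - y) i| := h1
    _ ≤ b * (d * ‖x - y‖) := by gcongr
    _ ≤ b * (d + 1) * ‖x - y‖ := by nlinarith [norm_nonneg (x - y)]

/-! ### Positive solutions of the system -/

/-- A classical solution of `(P_Λ)` with nonnegative components. -/
structure PosSol (d : ℕ) (Λ : ℝ) (u v : EuclideanSpace ℝ (Fin d) → ℝ) : Prop where
  sol : IsSolution d Λ u v
  u_nonneg : ∀ x, 0 ≤ u x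
  v_nonneg : ∀ x, 0 ≤ v x

namespace PosSol

variable {d : ℕ} {Λ : ℝ} {u v u₁ v₁ u₂ v₂ : EuclideanSpace ℝ (Fin d) → ℝ}

lemma swap (h : PosSol d Λ u v) : PosSol d Λ v u := by
  obtain ⟨⟨h1, h2, h3, h4⟩, h5, h6⟩ := h
  exact ⟨⟨h2, h1, fun x => by rw [h4 x]; ring, fun x => by rw [h3 x]; ring⟩, h6, h5⟩

lemma translate (h : PosSol d Λ u v) (s : EuclideanSpace ℝ (Fin d)) :
    PosSol d Λ (fun x => u (x + s)) (fun x => v (x + s)) := by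
  obtain ⟨⟨h1, h2, h3, h4⟩, h5, h6⟩ := h
  have ha : ContDiff ℝ 2 (fun x : EuclideanSpace ℝ (Fin d) => x + s) := by fun_prop
  refine ⟨⟨h1.comp ha, h2.comp ha, fun x => ?_, fun x => ?_⟩, fun x => h5 _, fun x => h6 _⟩
  · rw [lap_translate]; exact h3 _
  · rw [lap_translate]; exact h4 _

lemma u_le (h : PosSol d Λ u v) (hΛ : 1 < Λ) (x : EuclideanSpace ℝ (Fin d)) :
    u x ≤ 9 + 2 * d := by
  refine keller_osserman h.sol.1 h.u_nonneg (fun y => ?_) x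
  have h1 := h.sol.2.2.1 y
  have h2 : 0 ≤ Λ * u y * v y ^ 2 := by
    have := h.u_nonneg y
    positivity
  linarith

lemma v_le (h : PosSol d Λ u v) (hΛ : 1 < Λ) (x : EuclideanSpace ℝ (Fin d)) :
    v x ≤ 9 + 2 * d := h.swap.u_le hΛ x

lemma lipschitz_u (h : PosSol d Λ u v) (hΛ : 1 < Λ) :
    ∃ L > 0, ∀ x y, |u x - u y| ≤ L * ‖x - y‖ := by
  set K : ℝ := 9 + 2 * d with hK
  refine lipschitz_of_bounded h.sol.1 (B := K) (C := K + K ^ 3 + Λ * K * K ^ 2)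
    (fun x => ?_) (fun x => ?_)
  · rw [abs_of_nonneg (h.u_nonneg x)]; exact h.u_le hΛ x
  · have h1 := h.sol.2.2.1 x
    have hu0 := h.u_nonneg x
    have hv0 := h.v_nonneg x
    have hu1 : u x ≤ K := h.u_le hΛ x
    have hv1 : v x ≤ K := h.v_le hΛ x
    have hu3 : u x ^ 3 ≤ K ^ 3 := by gcongr
    have hc : Λ * u x * v x ^ 2 ≤ Λ * K * K ^ 2 := by gcongr
    have hu3' : 0 ≤ u x ^ 3 := by positivity
    have hc' : 0 ≤ Λ * u x * v x ^ 2 := by positivity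
    rw [abs_le]
    constructor <;> linarith

lemma lipschitz_v (h : PosSol d Λ u v) (hΛ : 1 < Λ) :
    ∃ L > 0, ∀ x y, |v x - v y| ≤ L * ‖x - y‖ := h.swap.lipschitz_u hΛ

end PosSol

lemma lipschitz_sub {d : ℕ} {f g : EuclideanSpace ℝ (Fin d) → ℝ}
    (hf : ∃ L > 0, ∀ x y, |f x - f y| ≤ L * ‖x - y‖)
    (hg : ∃ L > 0, ∀ x y, |g x - g y| ≤ L * ‖x - y‖) :
    ∃ L > 0, ∀ x y, |(f x - g x) - (f y - g y)| ≤ L * ‖x - y‖ := by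
  obtain ⟨L₁, h1, hf⟩ := hf
  obtain ⟨L₂, h2, hg⟩ := hg
  refine ⟨L₁ + L₂, by positivity, fun x y => ?_⟩
  have e1 := abs_le.mp (hf x y)
  have e2 := abs_le.mp (hg x y)
  rw [abs_le, add_mul]
  constructor <;> linarith [e1.1, e1.2, e2.1, e2.2]

/-- Pointwise coercivity behind the comparison principle. The reaction terms of `u₁` and `u₂`
differ by `c w + b z` with `w = u₁ - u₂`, `z = v₂ - v₁` and `b ≥ 0`. If `(u₁, v₁)` is close to
`(1, 0)` or `(u₂, v₂)` is close to `(0, 1)`, the coefficients can be chosen so that, where `w < 0`,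
`c` is negative and bounded away from `0`, and moreover `b` is small if also `z < 0`. The lemma is
stated for the values `a₁, b₁, a₂, b₂` of `u₁, v₁, u₂, v₂` at a point. -/
lemma reaction_gap {Λ K η m a₁ b₁ a₂ b₂ : ℝ} (hΛ : 1 < Λ) (hK : 1 ≤ K) (hη0 : 0 < η)
    (hη1 : η ≤ 1 / 10) (hη2 : 8 * Λ * K * η ≤ 1) (hη3 : 16 * Λ * K * η ≤ Λ - 1) (hm : 0 < m)
    (ha₁ : 0 ≤ a₁) (hb₁ : 0 ≤ b₁) (ha₂ : 0 ≤ a₂) (hb₂ : 0 ≤ b₂)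
    (hb₁K : b₁ ≤ K) (ha₂K : a₂ ≤ K)
    (hb₂K : b₂ ≤ K) (hw : a₁ - a₂ ≤ -(m / 2)) (hz : -m ≤ b₂ - b₁)
    (hreg : (|a₁ - 1| ≤ η ∧ |b₁| ≤ η) ∨ (|a₂| ≤ η ∧ |b₂ - 1| ≤ η)) :
    min (1 / 4) ((Λ - 1) / 8) * m ≤
      (a₁ - a₁ ^ 3 - Λ * a₁ * b₁ ^ 2) - (a₂ - a₂ ^ 3 - Λ * a₂ * b₂ ^ 2) := by
  have hΛ0 : 0 < Λ := by linarith
  rcases hreg with ⟨h1, h2⟩ | ⟨h1, h2⟩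
  · rw [abs_le] at h1 h2
    have hlow : 9 / 10 ≤ a₁ := by linarith
    have hlow2 : 9 / 10 ≤ a₂ := by linarith
    have hid : (a₁ - a₁ ^ 3 - Λ * a₁ * b₁ ^ 2) - (a₂ - a₂ ^ 3 - Λ * a₂ * b₂ ^ 2)
        = ((a₁ ^ 2 + a₁ * a₂ + a₂ ^ 2) + Λ * b₁ ^ 2 - 1) * (a₂ - a₁)
          + Λ * a₂ * (b₁ + b₂) * (b₂ - b₁) := by ring
    have hc : 1 ≤ (a₁ ^ 2 + a₁ * a₂ + a₂ ^ 2) + Λ * b₁ ^ 2 - 1 := by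
      have : 0 ≤ Λ * b₁ ^ 2 := by positivity
      nlinarith
    have hcw : 1 * (m / 2) ≤ ((a₁ ^ 2 + a₁ * a₂ + a₂ ^ 2) + Λ * b₁ ^ 2 - 1) * (a₂ - a₁) := by
      apply mul_le_mul hc (by linarith) (by linarith) (by linarith)
    have hbz : -(1 / 4 * m) ≤ Λ * a₂ * (b₁ + b₂) * (b₂ - b₁) := by
      rcases le_total b₁ b₂ with h | h
      · have h3 : 0 ≤ b₂ - b₁ := by linarith
        have : 0 ≤ Λ * a₂ * (b₁ + b₂) * (b₂ - b₁) := by positivity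
        linarith
      · have h3 : Λ * a₂ * (b₁ + b₂) * (b₁ - b₂) ≤ Λ * K * (η + η) * m := by
          have h4 : 0 ≤ b₁ - b₂ := by linarith
          have h5 : b₁ ≤ η := h2.2
          have h6 : b₂ ≤ η := by linarith
          have h7 : b₁ - b₂ ≤ m := by linarith
          gcongr
        have h8 : 8 * Λ * K * η * m ≤ 1 * m := by gcongr
        linarith
    have hmin : min (1 / 4) ((Λ - 1) / 8) * m ≤ 1 / 4 * m := by
      gcongr; exact min_le_left _ _
    rw [hid]; linarith
  · rw [abs_le] at h1 h2
    have hid : (a₁ - a₁ ^ 3 - Λ * a₁ * b₁ ^ 2) - (a₂ - a₂ ^ 3 - Λ * a₂ * b₂ ^ 2)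
        = ((a₁ ^ 2 + a₁ * a₂ + a₂ ^ 2) + Λ * b₂ ^ 2 - 1) * (a₂ - a₁)
          + Λ * a₁ * (b₁ + b₂) * (b₂ - b₁) := by ring
    have hΛη : 2 * Λ * η ≤ (Λ - 1) / 8 := by
      have : 16 * Λ * 1 * η ≤ 16 * Λ * K * η := by gcongr
      linarith
    have hc : (Λ - 1) / 2 ≤ (a₁ ^ 2 + a₁ * a₂ + a₂ ^ 2) + Λ * b₂ ^ 2 - 1 := by
      have e1 : 0 ≤ a₁ ^ 2 + a₁ * a₂ + a₂ ^ 2 := by positivity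
      have e2 : 1 - 2 * η ≤ b₂ ^ 2 := by nlinarith
      have e3 : Λ * (1 - 2 * η) ≤ Λ * b₂ ^ 2 := by gcongr
      linarith
    have hcw : (Λ - 1) / 2 * (m / 2)
        ≤ ((a₁ ^ 2 + a₁ * a₂ + a₂ ^ 2) + Λ * b₂ ^ 2 - 1) * (a₂ - a₁) := by
      apply mul_le_mul hc (by linarith) (by linarith) (by linarith)
    have hbz : -((Λ - 1) / 8 * m) ≤ Λ * a₁ * (b₁ + b₂) * (b₂ - b₁) := by
      rcases le_total b₁ b₂ with h | h
      · have h3 : 0 ≤ b₂ - b₁ := by linarith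
        have : 0 ≤ Λ * a₁ * (b₁ + b₂) * (b₂ - b₁) := by positivity
        have : 0 ≤ (Λ - 1) / 8 * m := mul_nonneg (by linarith) hm.le
        linarith
      · have h3 : Λ * a₁ * (b₁ + b₂) * (b₁ - b₂) ≤ Λ * η * (K + K) * m := by
          have h4 : 0 ≤ b₁ - b₂ := by linarith
          have h5 : a₁ ≤ η := by linarith
          have h7 : b₁ - b₂ ≤ m := by linarith
          gcongr
        have h8 : 16 * Λ * K * η * m ≤ (Λ - 1) * m := by gcongr
        linarith
    have hmin : min (1 / 4) ((Λ - 1) / 8) * m ≤ (Λ - 1) / 8 * m := by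
      gcongr; exact min_le_right _ _
    rw [hid]; linarith

/-- The comparison principle cannot fail through an almost minimal point of `u₁ - u₂`. -/
lemma comparison_half {d : ℕ} {Λ K η m : ℝ} {u₁ v₁ u₂ v₂ : EuclideanSpace ℝ (Fin d) → ℝ}
    (hΛ : 1 < Λ) (h₁ : PosSol d Λ u₁ v₁) (h₂ : PosSol d Λ u₂ v₂) (hK : K = 9 + 2 * d)
    (hη0 : 0 < η) (hη1 : η ≤ 1 / 10) (hη2 : 8 * Λ * K * η ≤ 1) (hη3 : 16 * Λ * K * η ≤ Λ - 1)
    (hm : 0 < m)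
    (hreg : ∀ x, (u₁ x < u₂ x ∨ v₂ x < v₁ x) →
      (|u₁ x - 1| ≤ η ∧ |v₁ x| ≤ η) ∨ (|u₂ x| ≤ η ∧ |v₂ x - 1| ≤ η))
    (hw : ∀ x, -m ≤ u₁ x - u₂ x) (hz : ∀ x, -m ≤ v₂ x - v₁ x) (x0 : EuclideanSpace ℝ (Fin d))
    (hx0 : u₁ x0 - u₂ x0 < -m + min (1 / 4) ((Λ - 1) / 8) * m / (8 * (d + 1))) : False := by
  set μ : ℝ := min (1 / 4) ((Λ - 1) / 8) with hμ
  have hμ0 : 0 < μ := lt_min (by norm_num) (by linarith)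
  have hμ1 : μ ≤ 1 / 4 := min_le_left _ _
  have hd : (0 : ℝ) ≤ d := Nat.cast_nonneg d
  have hε : 0 < μ * m / (8 * (d + 1)) := by positivity
  obtain ⟨x, hx, hlap⟩ := almost_min (h₁.sol.1.sub h₂.sol.1) hw hε x0 hx0
  have hε2 : μ * m / (8 * (d + 1)) ≤ m / 2 := by
    rw [div_le_iff₀ (by positivity)]
    nlinarith [mul_nonneg hm.le hd]
  have hε3 : 4 * d * (μ * m / (8 * (d + 1))) < μ * m := by
    have : 4 * d * (μ * m / (8 * (d + 1))) = μ * m * (4 * d / (8 * (d + 1))) := by ring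
    rw [this]
    have h1 : (4 * d / (8 * (d + 1)) : ℝ) < 1 := by
      rw [div_lt_one (by positivity)]; linarith
    have h2 : 0 < μ * m := by positivity
    nlinarith
  have hgap := reaction_gap hΛ (by rw [hK]; linarith : 1 ≤ K) hη0 hη1 hη2 hη3 hm (h₁.u_nonneg x)
    (h₁.v_nonneg x) (h₂.u_nonneg x) (h₂.v_nonneg x) (hK ▸ h₁.v_le hΛ x) (hK ▸ h₂.u_le hΛ x)
    (hK ▸ h₂.v_le hΛ x) (by linarith : u₁ x - u₂ x ≤ -(m / 2)) (hz x)
    (hreg x (Or.inl (by linarith)))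
  have h3 : lap d (fun y => u₁ y - u₂ y) x = _ := lap_sub h₁.sol.1 h₂.sol.1 x
  have e1 := h₁.sol.2.2.1 x
  have e2 := h₂.sol.2.2.1 x
  rw [← hμ] at hgap
  have hlap' : -(4 * d * (μ * m / (8 * (d + 1)))) ≤ lap d (fun y => u₁ y - u₂ y) x := hlap
  linarith

/-- Comparison principle: `u₂ ≤ u₁` and `v₁ ≤ v₂` as soon as, at each point where this fails,
one of the two solutions is close to its stable state. -/
lemma comparison {d : ℕ} {Λ K η : ℝ} {u₁ v₁ u₂ v₂ : EuclideanSpace ℝ (Fin d) → ℝ}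
    (hΛ : 1 < Λ) (h₁ : PosSol d Λ u₁ v₁) (h₂ : PosSol d Λ u₂ v₂) (hK : K = 9 + 2 * d)
    (hη0 : 0 < η) (hη1 : η ≤ 1 / 10) (hη2 : 8 * Λ * K * η ≤ 1) (hη3 : 16 * Λ * K * η ≤ Λ - 1)
    (hreg : ∀ x, (u₁ x < u₂ x ∨ v₂ x < v₁ x) →
      (|u₁ x - 1| ≤ η ∧ |v₁ x| ≤ η) ∨ (|u₂ x| ≤ η ∧ |v₂ x - 1| ≤ η)) (x : EuclideanSpace ℝ (Fin d)) :
    u₂ x ≤ u₁ x ∧ v₁ x ≤ v₂ x := by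
  by_contra hcon
  set M : EuclideanSpace ℝ (Fin d) → ℝ := fun x => max (u₂ x - u₁ x) (v₁ x - v₂ x) with hM
  have hbdd : BddAbove (Set.range M) := by
    refine ⟨K, ?_⟩
    rintro _ ⟨y, rfl⟩
    have e1 := h₂.u_le hΛ y
    have e2 := h₁.v_le hΛ y
    have e3 := h₁.u_nonneg y
    have e4 := h₂.v_nonneg y
    rw [hK]
    exact max_le (by linarith) (by linarith)
  set m := sSup (Set.range M) with hm
  have hle : ∀ y, M y ≤ m := fun y => le_csSup hbdd ⟨y, rfl⟩
  have hmpos : 0 < m := by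
    refine lt_of_lt_of_le ?_ (hle x)
    rw [lt_max_iff]
    by_contra hc
    push Not at hc
    exact hcon ⟨by linarith, by linarith⟩
  have hw : ∀ y, -m ≤ u₁ y - u₂ y := fun y => by
    have := (le_max_left _ _).trans (hle y); linarith
  have hz : ∀ y, -m ≤ v₂ y - v₁ y := fun y => by
    have := (le_max_right _ _).trans (hle y); linarith
  have hμ0 : 0 < min (1 / 4) ((Λ - 1) / 8) := lt_min (by norm_num) (by linarith)
  have hε : 0 < min (1 / 4) ((Λ - 1) / 8) * m / (8 * (d + 1)) := by positivity
  obtain ⟨_, ⟨y, rfl⟩, hy⟩ := exists_lt_of_lt_csSup (Set.range_nonempty M)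
    (sub_lt_self m hε)
  rcases lt_max_iff.mp hy with hy | hy
  · exact comparison_half hΛ h₁ h₂ hK hη0 hη1 hη2 hη3 hmpos hreg hw hz y (by linarith)
  · refine comparison_half hΛ h₂.swap h₁.swap hK hη0 hη1 hη2 hη3 hmpos (fun x hx => ?_) hz hw y
      (by linarith)
    rcases hreg x hx.symm with h | h
    · exact Or.inr ⟨h.2, h.1⟩
    · exact Or.inl ⟨h.2, h.1⟩

/-- The difference of two ordered solutions is a supersolution of a linear equation. -/
lemma lap_diff_le {d : ℕ} {Λ K : ℝ} {u₁ v₁ u₂ v₂ : EuclideanSpace ℝ (Fin d) → ℝ}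
    (hΛ : 1 < Λ) (h₁ : PosSol d Λ u₁ v₁) (h₂ : PosSol d Λ u₂ v₂) (hK : K = 9 + 2 * d)
    (hord : ∀ x, u₂ x ≤ u₁ x ∧ v₁ x ≤ v₂ x) (x : EuclideanSpace ℝ (Fin d)) :
    lap d (fun y => u₁ y - u₂ y) x ≤ (3 * K ^ 2 + Λ * K ^ 2) * (u₁ x - u₂ x) := by
  rw [lap_sub h₁.sol.1 h₂.sol.1]
  have e1 := h₁.sol.2.2.1 x
  have e2 := h₂.sol.2.2.1 x
  have hid : lap d u₁ x - lap d u₂ x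
      = ((u₁ x ^ 2 + u₁ x * u₂ x + u₂ x ^ 2) + Λ * v₁ x ^ 2 - 1) * (u₁ x - u₂ x)
        - Λ * u₂ x * (v₁ x + v₂ x) * (v₂ x - v₁ x) := by linear_combination e2 - e1
  have hw : 0 ≤ u₁ x - u₂ x := by linarith [(hord x).1]
  have hz : 0 ≤ v₂ x - v₁ x := by linarith [(hord x).2]
  have a1 := h₁.u_nonneg x
  have a2 := h₂.u_nonneg x
  have a3 := h₁.v_nonneg x
  have a4 := h₂.v_nonneg x
  have b1 : u₁ x ≤ K := hK ▸ h₁.u_le hΛ x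
  have b2 : u₂ x ≤ K := hK ▸ h₂.u_le hΛ x
  have b3 : v₁ x ≤ K := hK ▸ h₁.v_le hΛ x
  have hc : (u₁ x ^ 2 + u₁ x * u₂ x + u₂ x ^ 2) + Λ * v₁ x ^ 2 - 1 ≤ 3 * K ^ 2 + Λ * K ^ 2 := by
    have hK0 : 0 ≤ K := a1.trans b1
    have c1 : u₁ x ^ 2 ≤ K ^ 2 := by gcongr
    have c2 : u₂ x ^ 2 ≤ K ^ 2 := by gcongr
    have c3 : u₁ x * u₂ x ≤ K * K := by gcongr
    have c4 : Λ * v₁ x ^ 2 ≤ Λ * K ^ 2 := by gcongr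
    linarith
  have hb : 0 ≤ Λ * u₂ x * (v₁ x + v₂ x) * (v₂ x - v₁ x) := by positivity
  rw [hid]
  nlinarith

/-- Uniform strong maximum principle for the difference of two ordered solutions. -/
lemma propagation_diff {d : ℕ} {Λ : ℝ} {u₁ v₁ u₂ v₂ : EuclideanSpace ℝ (Fin d) → ℝ}
    (hΛ : 1 < Λ) (h₁ : PosSol d Λ u₁ v₁) (h₂ : PosSol d Λ u₂ v₂)
    (hord : ∀ x, u₂ x ≤ u₁ x ∧ v₁ x ≤ v₂ x) {R ε : ℝ} (hR : 0 ≤ R) (hε : 0 < ε) :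
    ∃ δ > 0, ∀ x y, ‖x - y‖ ≤ R → u₁ x - u₂ x < δ → u₁ y - u₂ y < ε := by
  obtain ⟨L, hL, hlip⟩ := lipschitz_sub (h₁.lipschitz_u hΛ) (h₂.lipschitz_u hΛ)
  exact propagation (w := fun x => u₁ x - u₂ x) (h₁.sol.1.sub h₂.sol.1)
    (by positivity) hL (fun x => by linarith [(hord x).1])
    (lap_diff_le hΛ h₁ h₂ rfl hord) hlip hR hε

lemma eq_zero_of_eq_zero {d : ℕ} {Λ : ℝ} {u v : EuclideanSpace ℝ (Fin d) → ℝ}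
    (hΛ : 1 < Λ) (h : PosSol d Λ u v) {x : EuclideanSpace ℝ (Fin d)} (hx : u x = 0)
    (y : EuclideanSpace ℝ (Fin d)) : u y = 0 := by
  set K : ℝ := 9 + 2 * d with hK
  obtain ⟨L, hL, hlip⟩ := h.lipschitz_u hΛ
  have hlap : ∀ x, lap d u x ≤ (K ^ 2 + Λ * K ^ 2) * u x := by
    intro x
    have e := h.sol.2.2.1 x
    have a1 := h.u_nonneg x
    have a2 := h.v_nonneg x
    have b1 : u x ≤ K := h.u_le hΛ x
    have b2 : v x ≤ K := h.v_le hΛ x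
    have c1 : u x ^ 2 ≤ K ^ 2 := by gcongr
    have c2 : Λ * v x ^ 2 ≤ Λ * K ^ 2 := by gcongr
    have hid : lap d u x = (u x ^ 2 + Λ * v x ^ 2 - 1) * u x := by linear_combination -e
    rw [hid]
    gcongr
    linarith
  refine le_antisymm (le_of_forall_pos_lt_add fun ε hε => ?_) (h.u_nonneg y)
  obtain ⟨δ, hδ, hprop⟩ := propagation h.sol.1 (by positivity) hL h.u_nonneg hlap hlip
    (norm_nonneg (x - y)) hε
  rw [zero_add]
  exact hprop x y le_rfl (by rw [hx]; exact hδ)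

/-- Two ordered solutions whose first components touch coincide. -/
lemma rigidity {d : ℕ} {Λ : ℝ} {u₁ v₁ u₂ v₂ : EuclideanSpace ℝ (Fin d) → ℝ}
    (hΛ : 1 < Λ) (h₁ : PosSol d Λ u₁ v₁) (h₂ : PosSol d Λ u₂ v₂)
    (hord : ∀ x, u₂ x ≤ u₁ x ∧ v₁ x ≤ v₂ x) (hne : ∃ x, u₂ x ≠ 0)
    {p : EuclideanSpace ℝ (Fin d)} (hp : u₁ p = u₂ p) (x : EuclideanSpace ℝ (Fin d)) :
    u₂ x = u₁ x ∧ v₂ x = v₁ x := by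
  have hu : ∀ y, u₁ y = u₂ y := by
    intro y
    refine le_antisymm (le_of_forall_pos_lt_add fun ε hε => ?_) (hord y).1
    obtain ⟨δ, hδ, hprop⟩ := propagation_diff hΛ h₁ h₂ hord (norm_nonneg (p - y)) hε
    have := hprop p y le_rfl (by rw [hp, sub_self]; exact hδ)
    linarith
  have hfun : u₁ = u₂ := funext hu
  refine ⟨(hu x).symm, ?_⟩
  have hpos : u₂ x ≠ 0 := by
    intro h0
    obtain ⟨y, hy⟩ := hne
    exact hy (eq_zero_of_eq_zero hΛ h₂ h0 y)
  have e1 := h₁.sol.2.2.1 x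
  have e2 := h₂.sol.2.2.1 x
  rw [hfun] at e1
  have hΛ0 : Λ ≠ 0 := by linarith
  have e3 : (Λ * u₂ x) * (v₁ x ^ 2) = (Λ * u₂ x) * (v₂ x ^ 2) := by linear_combination e1 - e2
  have e4 : v₁ x ^ 2 = v₂ x ^ 2 := mul_left_cancel₀ (mul_ne_zero hΛ0 hpos) e3
  exact ((pow_left_inj₀ (h₁.v_nonneg x) (h₂.v_nonneg x) two_ne_zero).mp e4).symm

/-! ### Sliding -/

/-- The unit vector in the direction `x_N`. -/
def eN (N : ℕ) : EuclideanSpace ℝ (Fin (N + 1)) := EuclideanSpace.single (Fin.last N) 1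

@[simp] lemma eN_last (N : ℕ) : (eN N) (Fin.last N) = 1 := by simp [eN]

@[simp] lemma norm_eN (N : ℕ) : ‖eN N‖ = 1 := by simp [eN]

lemma exists_eta {Λ K : ℝ} (hΛ : 1 < Λ) (hK : 0 < K) :
    ∃ η > 0, η ≤ 1 / 10 ∧ 8 * Λ * K * η ≤ 1 ∧ 16 * Λ * K * η ≤ Λ - 1 := by
  have hΛ0 : 0 < Λ := by linarith
  have hΛ1 : 0 < Λ - 1 := by linarith
  refine ⟨min (1 / 10) (min (1 / (8 * Λ * K)) ((Λ - 1) / (16 * Λ * K))), by positivity,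
    min_le_left _ _, ?_, ?_⟩
  · calc 8 * Λ * K * min (1 / 10) (min (1 / (8 * Λ * K)) ((Λ - 1) / (16 * Λ * K)))
        ≤ 8 * Λ * K * (1 / (8 * Λ * K)) := by
          gcongr; exact (min_le_right _ _).trans (min_le_left _ _)
      _ = 1 := by field_simp
  · calc 16 * Λ * K * min (1 / 10) (min (1 / (8 * Λ * K)) ((Λ - 1) / (16 * Λ * K)))
        ≤ 16 * Λ * K * ((Λ - 1) / (16 * Λ * K)) := by
          gcongr; exact (min_le_right _ _).trans (min_le_right _ _)
      _ = Λ - 1 := by field_simp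

/-- Sliding: there is a critical translation `t` in the direction `x_N` for which the translate
of the first solution still dominates the second one, while one of the two differences has
infimum zero over some strip `|x_N| ≤ M`. -/
lemma sliding {N : ℕ} {Λ : ℝ} {u₁ v₁ u₂ v₂ : EuclideanSpace ℝ (Fin (N + 1)) → ℝ}
    (hΛ : 1 < Λ) (h₁ : PosSol (N + 1) Λ u₁ v₁) (h₂ : PosSol (N + 1) Λ u₂ v₂)
    (hi₁ : Hinf N u₁ v₁) (hi₂ : Hinf N u₂ v₂) :
    ∃ t M : ℝ, (∀ x, u₂ x ≤ u₁ (x + t • eN N) ∧ v₁ (x + t • eN N) ≤ v₂ x) ∧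
      ((∀ δ > 0, ∃ x : EuclideanSpace ℝ (Fin (N + 1)), |x (Fin.last N)| ≤ M ∧
          u₁ (x + t • eN N) - u₂ x < δ) ∨
        (∀ δ > 0, ∃ x : EuclideanSpace ℝ (Fin (N + 1)), |x (Fin.last N)| ≤ M ∧
          v₂ x - v₁ (x + t • eN N) < δ)) := by
  obtain ⟨η, hη0, hη1, hη2, hη3⟩ := exists_eta (K := 9 + 2 * ((N + 1 : ℕ) : ℝ)) hΛ (by positivity)
  obtain ⟨M₁, hM₁⟩ := hi₁.1 η hη0
  obtain ⟨M₂, hM₂⟩ := hi₂.2 η hη0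
  have hcomp : ∀ t : ℝ, (∀ x : EuclideanSpace ℝ (Fin (N + 1)),
      (u₁ (x + t • eN N) < u₂ x ∨ v₂ x < v₁ (x + t • eN N)) →
        M₁ ≤ x (Fin.last N) + t ∨ x (Fin.last N) ≤ M₂) →
      ∀ x, u₂ x ≤ u₁ (x + t • eN N) ∧ v₁ (x + t • eN N) ≤ v₂ x := by
    intro t ht
    refine comparison hΛ (h₁.translate (t • eN N)) h₂ rfl hη0 hη1 hη2 hη3 fun x hx => ?_
    rcases ht x hx with h | h
    · left
      have := hM₁ (x + t • eN N) (by simpa using h)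
      exact ⟨this.1.le, this.2.le⟩
    · right
      have := hM₂ x h
      exact ⟨this.1.le, this.2.le⟩
  set T : Set ℝ := {t | ∀ x, u₂ x ≤ u₁ (x + t • eN N) ∧ v₁ (x + t • eN N) ≤ v₂ x} with hT
  have hTne : T.Nonempty := by
    refine ⟨M₁ - M₂, hcomp _ fun x _ => ?_⟩
    rcases le_total (x (Fin.last N)) M₂ with h | h
    · exact Or.inr h
    · left; linarith
  have hTbdd : BddBelow T := by
    obtain ⟨A, hA⟩ := hi₁.2 (1 / 4) (by norm_num)
    obtain ⟨B, hB⟩ := hi₂.1 (1 / 4) (by norm_num)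
    refine ⟨A - B, fun t ht => ?_⟩
    by_contra hlt
    push Not at hlt
    have e1 := (ht (B • eN N)).1
    have e2 := (abs_lt.mp (hA (B • eN N + t • eN N) (by simp; linarith)).1).2
    have e3 := (abs_lt.mp (hB (B • eN N) (by simp)).1).1
    linarith
  have hu₁c : Continuous u₁ := h₁.sol.1.continuous
  have hv₁c : Continuous v₁ := h₁.sol.2.1.continuous
  have hTcl : IsClosed T := by
    simp only [hT, Set.ofPred_forall, Set.ofPred_and]
    refine isClosed_iInter fun x => IsClosed.inter ?_ ?_
    · exact isClosed_le (by fun_prop) (by fun_prop)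
    · exact isClosed_le (by fun_prop) (by fun_prop)
  set t := sInf T with ht
  have htT : t ∈ T := hTcl.csInf_mem hTne hTbdd
  refine ⟨t, max |M₂| |M₁ - t + 1|, htT, ?_⟩
  by_contra hcon
  push Not at hcon
  obtain ⟨⟨δ₁, hδ₁, hw⟩, ⟨δ₂, hδ₂, hz⟩⟩ := hcon
  obtain ⟨L₁, hL₁, hlip₁⟩ := h₁.lipschitz_u hΛ
  obtain ⟨L₂, hL₂, hlip₂⟩ := h₁.lipschitz_v hΛ
  set h : ℝ := min 1 (min (δ₁ / L₁) (δ₂ / L₂)) with hh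
  have hh0 : 0 < h := by positivity
  have hh1 : h ≤ 1 := min_le_left _ _
  have hh2 : L₁ * h ≤ δ₁ := by
    have : h ≤ δ₁ / L₁ := (min_le_right _ _).trans (min_le_left _ _)
    rw [le_div_iff₀ hL₁] at this; linarith
  have hh3 : L₂ * h ≤ δ₂ := by
    have : h ≤ δ₂ / L₂ := (min_le_right _ _).trans (min_le_right _ _)
    rw [le_div_iff₀ hL₂] at this; linarith
  have hmem : t - h ∈ T := by
    refine hcomp (t - h) fun x hx => ?_
    by_cases hxM : |x (Fin.last N)| ≤ max |M₂| |M₁ - t + 1|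
    · exfalso
      have hn : ‖(x + t • eN N) - (x + (t - h) • eN N)‖ = h := by
        rw [show (x + t • eN N) - (x + (t - h) • eN N) = h • eN N by rw [sub_smul]; abel,
          norm_smul, norm_eN, Real.norm_of_nonneg hh0.le, mul_one]
      have e1 := abs_le.mp (hlip₁ (x + t • eN N) (x + (t - h) • eN N))
      have e2 := abs_le.mp (hlip₂ (x + t • eN N) (x + (t - h) • eN N))
      rw [hn] at e1 e2
      have e3 := hw x hxM
      have e4 := hz x hxM
      rcases hx with hx | hx <;> linarith [e1.1, e1.2, e2.1, e2.2]
    · push Not at hxM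
      obtain ⟨f1, f2⟩ := max_lt_iff.mp hxM
      rcases le_total 0 (x (Fin.last N)) with h0 | h0
      · left
        rw [abs_of_nonneg h0] at f2
        linarith [le_abs_self (M₁ - t + 1)]
      · right
        rw [abs_of_nonpos h0] at f1
        linarith [neg_abs_le M₂]
  have := csInf_le hTbdd hmem
  linarith

/-- A function with distinct limits as `x_N → ±∞` cannot be almost invariant, on large balls
centred in a strip, under a translation that moves `x_N`: telescoping along the translates
would make its oscillation small. -/
lemma no_almost_period {N : ℕ} {f : EuclideanSpace ℝ (Fin (N + 1)) → ℝ}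
    {q : EuclideanSpace ℝ (Fin (N + 1))} (hq : q (Fin.last N) ≠ 0) {M A B : ℝ}
    (hA : ∀ x : EuclideanSpace ℝ (Fin (N + 1)), A ≤ x (Fin.last N) → 3 / 4 ≤ f x)
    (hB : ∀ x : EuclideanSpace ℝ (Fin (N + 1)), x (Fin.last N) ≤ B → f x ≤ 1 / 4)
    (hprop : ∀ R ε : ℝ, 0 ≤ R → 0 < ε → ∃ δ > 0, ∀ x y : EuclideanSpace ℝ (Fin (N + 1)),
      ‖x - y‖ ≤ R → |f (x + q) - f x| < δ → |f (y + q) - f y| < ε)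
    (hsmall : ∀ δ > 0, ∃ x : EuclideanSpace ℝ (Fin (N + 1)), |x (Fin.last N)| ≤ M ∧
      |f (x + q) - f x| < δ) : False := by
  set t := q (Fin.last N) with ht
  have ht0 : 0 < |t| := abs_pos.mpr hq
  obtain ⟨k, hk⟩ := exists_nat_gt ((|M| + |A| + |B|) / |t|)
  rw [div_lt_iff₀ ht0] at hk
  have hkpos : (0 : ℝ) < k := by
    by_contra hle
    push Not at hle
    have : (k : ℝ) * |t| ≤ 0 := mul_nonpos_of_nonpos_of_nonneg hle ht0.le
    linarith [abs_nonneg M, abs_nonneg A, abs_nonneg B]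
  obtain ⟨δ, hδ, hp⟩ := hprop (k * ‖q‖) (1 / (8 * k)) (by positivity) (by positivity)
  obtain ⟨x, hxM, hx⟩ := hsmall δ hδ
  set g : ℕ → ℝ := fun j => f (x + ((j : ℝ) - k) • q) with hg
  have hstep : ∀ j ∈ Finset.range (2 * k), |g (j + 1) - g j| ≤ 1 / (8 * k) := by
    intro j hj
    have hj' : (j : ℝ) ≤ 2 * k := by exact_mod_cast (Finset.mem_range.mp hj).le
    have e1 := hp x (x + ((j : ℝ) - k) • q) (by
      rw [sub_add_cancel_left, norm_neg, norm_smul]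
      gcongr
      rw [Real.norm_eq_abs, abs_le]
      constructor <;> linarith [(Nat.cast_nonneg j : (0 : ℝ) ≤ j)]) hx
    rw [show x + ((j : ℝ) - k) • q + q = x + (((j + 1 : ℕ) : ℝ) - k) • q by
      push_cast
      rw [add_assoc, show ((j : ℝ) + 1 - k) = ((j : ℝ) - k) + 1 by ring, add_smul _ (1 : ℝ),
        one_smul]] at e1
    exact e1.le
  have htel : |g (2 * k) - g 0| ≤ 1 / 4 := by
    rw [← Finset.sum_range_sub g (2 * k)]
    refine (Finset.abs_sum_le_sum_abs _ _).trans ((Finset.sum_le_sum hstep).trans ?_)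
    simp
    field_simp
    norm_num
  have hg1 : g (2 * k) = f (x + (k : ℝ) • q) := by
    simp only [hg]; congr 3; push_cast; ring
  have hg0 : g 0 = f (x + (-(k : ℝ)) • q) := by
    simp only [hg]; congr 3; push_cast; ring
  have hxx := abs_le.mp hxM
  have hMM := le_abs_self M
  have hAA := le_abs_self A
  have hBB := neg_abs_le B
  have hAn := abs_nonneg A
  have hBn := abs_nonneg B
  have l1 : (x + (k : ℝ) • q) (Fin.last N) = x (Fin.last N) + k * t := by simp [ht]
  have l2 : (x + (-(k : ℝ)) • q) (Fin.last N) = x (Fin.last N) - k * t := by simp [ht]; ring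
  rw [hg1, hg0, abs_le] at htel
  rcases lt_or_gt_of_ne hq with hneg | hpos
  · rw [abs_of_neg hneg] at hk
    have e1 := hA (x + (-(k : ℝ)) • q) (by rw [l2]; linarith)
    have e2 := hB (x + (k : ℝ) • q) (by rw [l1]; linarith)
    linarith
  · rw [abs_of_pos hpos] at hk
    have e1 := hA (x + (k : ℝ) • q) (by rw [l1]; linarith)
    have e2 := hB (x + (-(k : ℝ)) • q) (by rw [l2]; linarith)
    linarith

lemma Hinf.translate {N : ℕ} {u v : EuclideanSpace ℝ (Fin (N + 1)) → ℝ} (h : Hinf N u v)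
    {s : EuclideanSpace ℝ (Fin (N + 1))} (hs : s (Fin.last N) = 0) :
    Hinf N (fun x => u (x + s)) (fun x => v (x + s)) := by
  refine ⟨fun ε hε => ?_, fun ε hε => ?_⟩
  · obtain ⟨M, hM⟩ := h.1 ε hε
    exact ⟨M, fun x hx => hM (x + s) (by simpa [hs] using hx)⟩
  · obtain ⟨M, hM⟩ := h.2 ε hε
    exact ⟨M, fun x hx => hM (x + s) (by simpa [hs] using hx)⟩

/-- Comparing a solution with its own horizontal translate: the critical translation is `0`. -/
lemma horizontal_le {N : ℕ} {Λ : ℝ} {u v : EuclideanSpace ℝ (Fin (N + 1)) → ℝ}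
    (hΛ : 1 < Λ) (h : PosSol (N + 1) Λ u v) (hi : Hinf N u v)
    {s : EuclideanSpace ℝ (Fin (N + 1))} (hs : s (Fin.last N) = 0)
    (x : EuclideanSpace ℝ (Fin (N + 1))) : u x ≤ u (x + s) ∧ v (x + s) ≤ v x := by
  obtain ⟨t, M, hord, hcase⟩ := sliding hΛ (h.translate s) h (hi.translate hs) hi
  have hassoc : ∀ y : EuclideanSpace ℝ (Fin (N + 1)), y + t • eN N + s = y + (t • eN N + s) :=
    fun y => add_assoc _ _ _
  simp only [hassoc] at hord hcase
  set q := t • eN N + s with hq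
  have hqN : q (Fin.last N) = t := by simp [hq, hs]
  have ht : t = 0 := by
    by_contra ht0
    have hq0 : q (Fin.last N) ≠ 0 := by rwa [hqN]
    obtain ⟨A, hA⟩ := hi.1 (1 / 4) (by norm_num)
    obtain ⟨B, hB⟩ := hi.2 (1 / 4) (by norm_num)
    rcases hcase with hc | hc
    · refine no_almost_period (f := u) hq0 (M := M) (A := A) (B := B)
        (fun y hy => ?_) (fun y hy => ?_) (fun R ε hR hε => ?_) (fun δ hδ => ?_)
      · have := (abs_lt.mp (hA y hy).1).1; linarith
      · have := (abs_lt.mp (hB y hy).1).2; linarith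
      · obtain ⟨δ, hδ, hp⟩ := propagation_diff hΛ (h.translate q) h hord hR hε
        refine ⟨δ, hδ, fun y z hyz hy => ?_⟩
        rw [abs_of_nonneg (by linarith [(hord y).1])] at hy
        rw [abs_of_nonneg (by linarith [(hord z).1])]
        exact hp y z hyz hy
      · obtain ⟨y, hyM, hy⟩ := hc δ hδ
        exact ⟨y, hyM, by rwa [abs_of_nonneg (by linarith [(hord y).1])]⟩
    · refine no_almost_period (f := fun y => 1 - v y) hq0 (M := M) (A := A) (B := B)
        (fun y hy => ?_) (fun y hy => ?_) (fun R ε hR hε => ?_) (fun δ hδ => ?_)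
      · have := (abs_lt.mp (hA y hy).2).2; linarith
      · have := (abs_lt.mp (hB y hy).2).1; linarith
      · obtain ⟨δ, hδ, hp⟩ := propagation_diff hΛ h.swap (h.translate q).swap
          (fun y => ⟨(hord y).2, (hord y).1⟩) hR hε
        refine ⟨δ, hδ, fun y z hyz hy => ?_⟩
        rw [sub_sub_sub_cancel_left] at hy ⊢
        rw [abs_of_nonneg (by linarith [(hord y).2])] at hy
        rw [abs_of_nonneg (by linarith [(hord z).2])]
        exact hp y z hyz hy
      · obtain ⟨y, hyM, hy⟩ := hc δ hδ
        exact ⟨y, hyM, by rwa [sub_sub_sub_cancel_left, abs_of_nonneg (by linarith [(hord y).2])]⟩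
  have hqs : q = s := by rw [hq, ht, zero_smul, zero_add]
  rw [← hqs]
  exact hord x

/-- One-dimensional symmetry: the solution depends only on `x_N`. -/
lemma one_dim {N : ℕ} {Λ : ℝ} {u v : EuclideanSpace ℝ (Fin (N + 1)) → ℝ}
    (hΛ : 1 < Λ) (h : PosSol (N + 1) Λ u v) (hi : Hinf N u v)
    {x y : EuclideanSpace ℝ (Fin (N + 1))} (hxy : x (Fin.last N) = y (Fin.last N)) :
    u x = u y ∧ v x = v y := by
  have h1 := horizontal_le hΛ h hi (s := y - x) (by simp [hxy]) x
  have h2 := horizontal_le hΛ h hi (s := x - y) (by simp [hxy]) y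
  rw [add_sub_cancel] at h1 h2
  exact ⟨le_antisymm h1.1 h2.1, le_antisymm h2.2 h1.2⟩

/-- A continuous nonnegative function of `x_N` alone with infimum zero over a strip vanishes
somewhere. -/
lemma exists_zero {N : ℕ} {w : EuclideanSpace ℝ (Fin (N + 1)) → ℝ} (hw : Continuous w)
    (hnn : ∀ x, 0 ≤ w x) (hdep : ∀ x, w x = w (x (Fin.last N) • eN N)) {M : ℝ}
    (hinf : ∀ δ > 0, ∃ x : EuclideanSpace ℝ (Fin (N + 1)), |x (Fin.last N)| ≤ M ∧ w x < δ) :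
    ∃ p, w p = 0 := by
  obtain ⟨x0, hx0, _⟩ := hinf 1 one_pos
  have hc : Continuous fun r : ℝ => w (r • eN N) := by fun_prop
  obtain ⟨r, _, hr⟩ := (isCompact_Icc (a := -M) (b := M)).exists_isMinOn
    ⟨_, abs_le.mp hx0⟩ hc.continuousOn
  refine ⟨r • eN N, ?_⟩
  by_contra hne
  obtain ⟨x, hxM, hx⟩ := hinf _ (lt_of_le_of_ne (hnn _) (Ne.symm hne))
  have h1 : w (r • eN N) ≤ w (x (Fin.last N) • eN N) := hr (abs_le.mp hxM)
  rw [← hdep x] at h1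
  linarith

/-- Corollary 1.2: uniqueness, modulo translations, of solutions
of `(P_Λ)` satisfying `(h∞)`. -/
theorem stmt_1 (N : ℕ) (Λ : ℝ) (hΛ : 1 < Λ)
    (u₁ v₁ u₂ v₂ : EuclideanSpace ℝ (Fin (N + 1)) → ℝ)
    (hsol₁ : IsSolution (N + 1) Λ u₁ v₁) (hsol₂ : IsSolution (N + 1) Λ u₂ v₂)
    (hu₁ : ∀ x, 0 ≤ u₁ x) (hv₁ : ∀ x, 0 ≤ v₁ x)
    (hu₂ : ∀ x, 0 ≤ u₂ x) (hv₂ : ∀ x, 0 ≤ v₂ x)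
    (hinf₁ : Hinf N u₁ v₁) (hinf₂ : Hinf N u₂ v₂) :
    ∃ τ : EuclideanSpace ℝ (Fin (N + 1)),
      ∀ x, u₂ x = u₁ (x + τ) ∧ v₂ x = v₁ (x + τ) := by
  have h₁ : PosSol (N + 1) Λ u₁ v₁ := ⟨hsol₁, hu₁, hv₁⟩
  have h₂ : PosSol (N + 1) Λ u₂ v₂ := ⟨hsol₂, hu₂, hv₂⟩
  obtain ⟨t, M, hord, hcase⟩ := sliding hΛ h₁ h₂ hinf₁ hinf₂
  refine ⟨t • eN N, ?_⟩
  have hcu₁ : Continuous u₁ := hsol₁.1.continuous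
  have hcv₁ : Continuous v₁ := hsol₁.2.1.continuous
  have hcu₂ : Continuous u₂ := hsol₂.1.continuous
  have hcv₂ : Continuous v₂ := hsol₂.2.1.continuous
  have hd₁ : ∀ x : EuclideanSpace ℝ (Fin (N + 1)),
      u₁ (x + t • eN N) = u₁ (x (Fin.last N) • eN N + t • eN N) ∧
      v₁ (x + t • eN N) = v₁ (x (Fin.last N) • eN N + t • eN N) :=
    fun x => one_dim hΛ h₁ hinf₁ (by simp)
  have hd₂ : ∀ x : EuclideanSpace ℝ (Fin (N + 1)),
      u₂ x = u₂ (x (Fin.last N) • eN N) ∧ v₂ x = v₂ (x (Fin.last N) • eN N) :=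
    fun x => one_dim hΛ h₂ hinf₂ (by simp)
  rcases hcase with hc | hc
  · obtain ⟨p, hp⟩ := exists_zero (w := fun x => u₁ (x + t • eN N) - u₂ x) (by fun_prop)
      (fun x => by linarith [(hord x).1])
      (fun x => by rw [(hd₁ x).1, (hd₂ x).1]) hc
    have hne : ∃ x, u₂ x ≠ 0 := by
      obtain ⟨A, hA⟩ := hinf₂.1 (1 / 2) (by norm_num)
      refine ⟨A • eN N, fun h0 => ?_⟩
      have := (hA (A • eN N) (by simp)).1
      rw [h0] at this
      norm_num at this
    exact rigidity hΛ (h₁.translate (t • eN N)) h₂ hord hne (sub_eq_zero.mp hp)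
  · obtain ⟨p, hp⟩ := exists_zero (w := fun x => v₂ x - v₁ (x + t • eN N)) (by fun_prop)
      (fun x => by linarith [(hord x).2])
      (fun x => by rw [(hd₁ x).2, (hd₂ x).2]) hc
    have hne : ∃ x, v₁ (x + t • eN N) ≠ 0 := by
      obtain ⟨A, hA⟩ := hinf₁.2 (1 / 2) (by norm_num)
      refine ⟨A • eN N - t • eN N, fun h0 => ?_⟩
      rw [sub_add_cancel] at h0
      have := (hA (A • eN N) (by simp)).2
      rw [h0] at this
      norm_num at this
    intro x
    have := rigidity hΛ h₂.swap (h₁.translate (t • eN N)).swap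
      (fun y => ⟨(hord y).2, (hord y).1⟩) hne (sub_eq_zero.mp hp) x
    exact ⟨this.2.symm, this.1.symm⟩
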